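/- arXiv:1210.0129 — 2 statements merged into one kernel-verified Lean document; each statement's English description precedes it below -/
import Mathlib

section
/- For all Schwartz functions u, v ∈ S(ℝⁿ, ℂ), the Wigner transform W(u,v)(x, ξ) := (2π)^{−n} ∫_{ℝⁿ} u(x + y/2) · conj(v(x − y/2)) · e^{−i(y|ξ)} dy is a well-defined Schwartz function on ℝ^{2n} = ℝⁿ × ℝⁿ, and it satisfies the Moyal identity: ∫_{ℝ^{2n}} |W(u,v)(x,ξ)|² dx dξ = (2π)^{−n} ‖u‖_{L²(ℝⁿ)}² · ‖v‖_{L²(ℝⁿ)}². -/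
open MeasureTheory

noncomputable section

/-- Euclidean scalar product on `ℝⁿ`. -/
def dotn {n : ℕ} (p q : Fin n → ℝ) : ℝ := ∑ i, p i * q i

open scoped SchwartzMap FourierTransform

namespace Wigner

section Tensor

variable {V W : Type*} [NormedAddCommGroup V] [NormedSpace ℝ V]
  [NormedAddCommGroup W] [NormedSpace ℝ W]

/-- The decay estimate making a tensor product of Schwartz functions a Schwartz function. -/
theorem tensor_decay (u : 𝓢(V, ℂ)) (v : 𝓢(W, ℂ)) (k m : ℕ) :
    ∃ C : ℝ, ∀ z : V × W,
      ‖z‖ ^ k * ‖iteratedFDeriv ℝ m (fun z : V × W => u z.1 * v z.2) z‖ ≤ C := by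
  have hu (i : ℕ) : ∃ C : ℝ, ∀ x, (1 + ‖x‖) ^ k * ‖iteratedFDeriv ℝ i u x‖ ≤ C :=
    ⟨_, fun x => SchwartzMap.one_add_le_sup_seminorm_apply (𝕜 := ℝ) (m := (k, i)) le_rfl le_rfl u x⟩
  have hv (i : ℕ) : ∃ C : ℝ, ∀ x, (1 + ‖x‖) ^ k * ‖iteratedFDeriv ℝ i v x‖ ≤ C :=
    ⟨_, fun x => SchwartzMap.one_add_le_sup_seminorm_apply (𝕜 := ℝ) (m := (k, i)) le_rfl le_rfl v x⟩
  choose A hA using hu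
  choose B hB using hv
  refine ⟨∑ i ∈ Finset.range (m + 1), (m.choose i : ℝ) * (A i * B (m - i)), fun z => ?_⟩
  have hfst (i : ℕ) : ‖iteratedFDeriv ℝ i (fun z : V × W => u z.1) z‖ ≤
      ‖iteratedFDeriv ℝ i u z.1‖ := by
    have h := (ContinuousLinearMap.fst ℝ V W).iteratedFDeriv_comp_right
      (u.smooth i) z (i := i) le_rfl
    change ‖iteratedFDeriv ℝ i (u ∘ ContinuousLinearMap.fst ℝ V W) z‖ ≤ _
    rw [h]
    refine (ContinuousMultilinearMap.norm_compContinuousLinearMap_le _ _).trans ?_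
    refine mul_le_of_le_one_right (norm_nonneg _) ?_
    exact Finset.prod_le_one (fun _ _ => norm_nonneg _)
      fun _ _ => ContinuousLinearMap.norm_fst_le ℝ V W
  have hsnd (i : ℕ) : ‖iteratedFDeriv ℝ i (fun z : V × W => v z.2) z‖ ≤
      ‖iteratedFDeriv ℝ i v z.2‖ := by
    have h := (ContinuousLinearMap.snd ℝ V W).iteratedFDeriv_comp_right
      (v.smooth i) z (i := i) le_rfl
    change ‖iteratedFDeriv ℝ i (v ∘ ContinuousLinearMap.snd ℝ V W) z‖ ≤ _
    rw [h]
    refine (ContinuousMultilinearMap.norm_compContinuousLinearMap_le _ _).trans ?_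
    refine mul_le_of_le_one_right (norm_nonneg _) ?_
    exact Finset.prod_le_one (fun _ _ => norm_nonneg _)
      fun _ _ => ContinuousLinearMap.norm_snd_le ℝ V W
  have hmul := norm_iteratedFDeriv_mul_le (𝕜 := ℝ) (N := m)
    (f := fun z : V × W => u z.1) (g := fun z : V × W => v z.2)
    ((u.smooth m).comp contDiff_fst) ((v.smooth m).comp contDiff_snd) z (n := m) le_rfl
  have hz : ‖z‖ ^ k ≤ (1 + ‖z.1‖) ^ k * (1 + ‖z.2‖) ^ k := by
    rw [← mul_pow]
    refine pow_le_pow_left₀ (norm_nonneg _) ?_ k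
    have h1 := norm_nonneg z.1
    have h2 := norm_nonneg z.2
    refine max_le ?_ ?_ <;> nlinarith
  calc ‖z‖ ^ k * ‖iteratedFDeriv ℝ m (fun z : V × W => u z.1 * v z.2) z‖
      ≤ ((1 + ‖z.1‖) ^ k * (1 + ‖z.2‖) ^ k) * ∑ i ∈ Finset.range (m + 1), (m.choose i : ℝ) *
          ‖iteratedFDeriv ℝ i u z.1‖ * ‖iteratedFDeriv ℝ (m - i) v z.2‖ := by
        refine mul_le_mul hz (hmul.trans ?_) (norm_nonneg _) (by positivity)
        gcongr with i hi
        · exact hfst i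
        · exact hsnd (m - i)
    _ = ∑ i ∈ Finset.range (m + 1), (m.choose i : ℝ) *
          (((1 + ‖z.1‖) ^ k * ‖iteratedFDeriv ℝ i u z.1‖) *
            ((1 + ‖z.2‖) ^ k * ‖iteratedFDeriv ℝ (m - i) v z.2‖)) := by
        rw [Finset.mul_sum]
        exact Finset.sum_congr rfl fun _ _ => by ring
    _ ≤ _ := by
        refine Finset.sum_le_sum fun i _ => ?_
        refine mul_le_mul_of_nonneg_left ?_ (by positivity)
        exact mul_le_mul (hA i z.1) (hB _ z.2) (by positivity)
          (le_trans (by positivity) (hA i z.1))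

/-- The tensor product `(x, y) ↦ u x * v y` of two Schwartz functions. -/
def tensor (u : 𝓢(V, ℂ)) (v : 𝓢(W, ℂ)) : 𝓢(V × W, ℂ) where
  toFun z := u z.1 * v z.2
  smooth' := ((u.smooth ⊤).comp contDiff_fst).mul ((v.smooth ⊤).comp contDiff_snd)
  decay' := tensor_decay u v

theorem tensor_apply (u : 𝓢(V, ℂ)) (v : 𝓢(W, ℂ)) (z : V × W) :
    tensor u v z = u z.1 * v z.2 := rfl

end Tensor

section PartialFourier

variable {n : ℕ} {E : Type} [NormedAddCommGroup E] [NormedSpace ℂ E]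

/-- The bilinear form `((x, y), (x', y')) ↦ (y|y')`. -/
def dotSnd (n : ℕ) : ((Fin n → ℝ) × (Fin n → ℝ)) →L[ℝ] ((Fin n → ℝ) × (Fin n → ℝ)) →L[ℝ] ℝ :=
  ∑ i, ((ContinuousLinearMap.proj i).comp
      (ContinuousLinearMap.snd ℝ (Fin n → ℝ) (Fin n → ℝ))).smulRight
    ((ContinuousLinearMap.proj i : (Fin n → ℝ) →L[ℝ] ℝ).comp
      (ContinuousLinearMap.snd ℝ (Fin n → ℝ) (Fin n → ℝ)))

theorem dotSnd_apply (z w : (Fin n → ℝ) × (Fin n → ℝ)) : dotSnd n z w = dotn z.2 w.2 := by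
  simp [dotSnd, dotn]

/-- The oscillating factor `e^{-i(y|ξ)}`. -/
def phase (y ξ : Fin n → ℝ) : ℂ := Complex.exp (-Complex.I * ((dotn y ξ : ℝ) : ℂ))

theorem norm_phase (y ξ : Fin n → ℝ) : ‖phase y ξ‖ = 1 := by
  simp [phase, Complex.norm_exp]

theorem continuous_phase_left (ξ : Fin n → ℝ) : Continuous fun y => phase y ξ := by
  unfold phase dotn
  fun_prop

theorem hasFDerivAt_phase_right (y : Fin n → ℝ) (z : (Fin n → ℝ) × (Fin n → ℝ)) :
    HasFDerivAt (fun z : (Fin n → ℝ) × (Fin n → ℝ) => phase y z.2)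
      ((dotSnd n (0, y)).smulRight (-Complex.I * phase y z.2)) z := by
  have h := ((Complex.ofRealCLM.hasFDerivAt.comp z (dotSnd n (0, y)).hasFDerivAt).const_mul
    (-Complex.I)).cexp
  refine (h.congr_of_eventuallyEq (.of_forall fun w => ?_)).congr_fderiv
    (ContinuousLinearMap.ext fun w => ?_)
  · simp [phase, dotSnd_apply]
  · simp [phase, dotSnd_apply]
    ring

theorem hasFDerivAt_phase_left (y ξ : Fin n → ℝ) :
    HasFDerivAt (fun y => phase y ξ)
      (((dotSnd n (0, ξ)).comp (ContinuousLinearMap.inr ℝ _ _)).smulRight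
        (-Complex.I * phase y ξ)) y := by
  have h := ((Complex.ofRealCLM.hasFDerivAt.comp y
    ((dotSnd n (0, ξ)).comp (ContinuousLinearMap.inr ℝ _ _)).hasFDerivAt).const_mul
    (-Complex.I)).cexp
  have hcomm (a b : Fin n → ℝ) : dotn a b = dotn b a := by simp [dotn, mul_comm]
  refine (h.congr_of_eventuallyEq (.of_forall fun w => ?_)).congr_fderiv
    (ContinuousLinearMap.ext fun w => ?_)
  · simp [phase, dotSnd_apply, hcomm w]
  · simp [phase, dotSnd_apply, hcomm y]
    ring

/-- The Fourier transform of a Schwartz function on `ℝⁿ × ℝⁿ` in the second variable. -/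
def partialFourier (G : 𝓢((Fin n → ℝ) × (Fin n → ℝ), E)) (z : (Fin n → ℝ) × (Fin n → ℝ)) : E :=
  ∫ y, phase y z.2 • G (z.1, y)

/-- A majorant of a Schwartz function that is integrable in the second variable and uniform
in the first. -/
theorem exists_integrable_bound (G : 𝓢((Fin n → ℝ) × (Fin n → ℝ), E)) :
    ∃ b : (Fin n → ℝ) → ℝ, Integrable b ∧ ∀ x y, ‖G (x, y)‖ ≤ b y := by
  obtain ⟨C, hC⟩ : ∃ C : ℝ, ∀ z, (1 + ‖z‖) ^ (n + 1) * ‖iteratedFDeriv ℝ 0 G z‖ ≤ C :=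
    ⟨_, fun x => SchwartzMap.one_add_le_sup_seminorm_apply (𝕜 := ℝ) (m := (n + 1, 0))
      le_rfl le_rfl G x⟩
  refine ⟨fun y => C * (1 + ‖y‖) ^ (-((n + 1 : ℕ) : ℝ)), ?_, fun x y => ?_⟩
  · exact (integrable_one_add_norm (by simp)).const_mul C
  · have h := hC (x, y)
    rw [norm_iteratedFDeriv_zero] at h
    have hy : ‖y‖ ≤ ‖((x, y) : (Fin n → ℝ) × (Fin n → ℝ))‖ := le_max_right _ _
    have hp : (0 : ℝ) < (1 + ‖y‖) ^ (n + 1) := by positivity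
    change ‖G (x, y)‖ ≤ C * (1 + ‖y‖) ^ (-((n + 1 : ℕ) : ℝ))
    rw [Real.rpow_neg (by positivity), Real.rpow_natCast, ← div_eq_mul_inv, le_div_iff₀ hp,
      mul_comm]
    refine le_trans ?_ h
    gcongr

theorem continuous_slice (G : 𝓢((Fin n → ℝ) × (Fin n → ℝ), E)) (x : Fin n → ℝ) :
    Continuous fun y => G (x, y) :=
  G.continuous.comp (by fun_prop)

theorem integrable_slice (G : 𝓢((Fin n → ℝ) × (Fin n → ℝ), E)) (x : Fin n → ℝ) :
    Integrable fun y => G (x, y) := by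
  obtain ⟨b, hb, h⟩ := exists_integrable_bound G
  exact hb.mono' (continuous_slice G x).aestronglyMeasurable (.of_forall (h x))

theorem continuous_phase_smul (G : 𝓢((Fin n → ℝ) × (Fin n → ℝ), E)) (x ξ : Fin n → ℝ) :
    Continuous fun y => phase y ξ • G (x, y) :=
  (continuous_phase_left ξ).smul (continuous_slice G x)

theorem integrable_phase_smul (G : 𝓢((Fin n → ℝ) × (Fin n → ℝ), E)) (x ξ : Fin n → ℝ) :
    Integrable fun y => phase y ξ • G (x, y) :=
  (integrable_slice G x).norm.mono' (continuous_phase_smul G x ξ).aestronglyMeasurable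
    (.of_forall fun y => by simp [norm_smul, norm_phase])

theorem exists_norm_partialFourier_le (G : 𝓢((Fin n → ℝ) × (Fin n → ℝ), E)) :
    ∃ C : ℝ, ∀ z, ‖partialFourier G z‖ ≤ C := by
  obtain ⟨b, hb, h⟩ := exists_integrable_bound G
  refine ⟨∫ y, b y, fun z => norm_integral_le_of_norm_le hb (.of_forall fun y => ?_)⟩
  simpa [norm_smul, norm_phase] using h z.1 y

/-- The Schwartz function whose partial Fourier transform is the derivative of the partial
Fourier transform of `G`. -/
def derivSymbol (G : 𝓢((Fin n → ℝ) × (Fin n → ℝ), E)) :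
    𝓢((Fin n → ℝ) × (Fin n → ℝ), ((Fin n → ℝ) × (Fin n → ℝ)) →L[ℝ] E) :=
  SchwartzMap.bilinLeftCLM (ContinuousLinearMap.compL ℝ _ _ E)
      (Function.HasTemperateGrowth.const ((ContinuousLinearMap.inl ℝ (Fin n → ℝ) (Fin n → ℝ)).comp
        (ContinuousLinearMap.fst ℝ (Fin n → ℝ) (Fin n → ℝ))))
      (SchwartzMap.fderivCLM ℝ _ E G) +
    (-Complex.I) • SchwartzMap.smulRightCLM ℂ E (dotSnd n) G

theorem derivSymbol_apply (G : 𝓢((Fin n → ℝ) × (Fin n → ℝ), E)) (z w : (Fin n → ℝ) × (Fin n → ℝ)) :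
    derivSymbol G z w = fderiv ℝ G z (w.1, 0) + (-Complex.I) • dotn z.2 w.2 • G z := by
  simp [derivSymbol, SchwartzMap.bilinLeftCLM_apply, dotSnd_apply]

theorem hasFDerivAt_phase_smul (G : 𝓢((Fin n → ℝ) × (Fin n → ℝ), E)) (y : Fin n → ℝ)
    (w : (Fin n → ℝ) × (Fin n → ℝ)) :
    HasFDerivAt (fun w : (Fin n → ℝ) × (Fin n → ℝ) => phase y w.2 • G (w.1, y))
      (phase y w.2 • derivSymbol G (w.1, y)) w := by
  have h1 : HasFDerivAt (fun w : (Fin n → ℝ) × (Fin n → ℝ) => (w.1, y))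
      ((ContinuousLinearMap.inl ℝ (Fin n → ℝ) (Fin n → ℝ)).comp
        (ContinuousLinearMap.fst ℝ (Fin n → ℝ) (Fin n → ℝ))) w :=
    (hasFDerivAt_fst.prodMk (hasFDerivAt_const y w)).congr_fderiv (by ext <;> simp)
  have hG : HasFDerivAt (fun w : (Fin n → ℝ) × (Fin n → ℝ) => G (w.1, y))
      ((fderiv ℝ G (w.1, y)).comp ((ContinuousLinearMap.inl ℝ (Fin n → ℝ) (Fin n → ℝ)).comp
        (ContinuousLinearMap.fst ℝ (Fin n → ℝ) (Fin n → ℝ)))) w :=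
    HasFDerivAt.comp (g := G) w (G.differentiable (w.1, y)).hasFDerivAt h1
  refine ((hasFDerivAt_phase_right y w).smul hG).congr_fderiv
    (ContinuousLinearMap.ext fun t => ?_)
  simp only [smul_apply, derivSymbol_apply, add_apply,
    ContinuousLinearMap.comp_apply, ContinuousLinearMap.smulRight_apply, dotSnd_apply,
    ContinuousLinearMap.inl_apply, ContinuousLinearMap.coe_fst', smul_add]
  congr 1
  rw [smul_assoc, smul_comm (-Complex.I) (dotn y t.2), smul_comm (phase y w.2) (dotn y t.2),
    smul_smul, mul_comm]

theorem hasFDerivAt_partialFourier (G : 𝓢((Fin n → ℝ) × (Fin n → ℝ), E))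
    (z : (Fin n → ℝ) × (Fin n → ℝ)) :
    HasFDerivAt (partialFourier G) (partialFourier (derivSymbol G) z) z := by
  obtain ⟨b, hb, h⟩ := exists_integrable_bound (derivSymbol G)
  have key := hasFDerivAt_integral_of_dominated_of_fderiv_le (𝕜 := ℝ) (bound := b) (μ := volume)
    (F := fun (z : (Fin n → ℝ) × (Fin n → ℝ)) y => phase y z.2 • G (z.1, y)) (x₀ := z)
    (F' := fun z y => phase y z.2 • derivSymbol G (z.1, y)) Filter.univ_mem
    (.of_forall fun w => (continuous_phase_smul G w.1 w.2).aestronglyMeasurable)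
    (integrable_phase_smul G z.1 z.2)
    (continuous_phase_smul (derivSymbol G) z.1 z.2).aestronglyMeasurable
    (.of_forall fun y w _ => by rw [norm_smul, norm_phase, one_mul]; exact h w.1 y) hb
    (.of_forall fun y w _ => hasFDerivAt_phase_smul G y w)
  exact key

theorem contDiff_partialFourier (m : ℕ) : ∀ {E : Type} [NormedAddCommGroup E] [NormedSpace ℂ E]
    (G : 𝓢((Fin n → ℝ) × (Fin n → ℝ), E)), ContDiff ℝ m (partialFourier G) := by
  induction m with
  | zero =>
    intro E _ _ G
    exact contDiff_zero.2 (continuous_iff_continuousAt.2 fun z =>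
      (hasFDerivAt_partialFourier G z).continuousAt)
  | succ m ih =>
    intro E _ _ G
    rw [Nat.cast_succ, contDiff_succ_iff_hasFDerivAt]
    exact ⟨_, ih (derivSymbol G), hasFDerivAt_partialFourier G⟩

/-- Multiplication by a coordinate of the first variable. -/
theorem exists_partialFourier_eq_fst_smul (G : 𝓢((Fin n → ℝ) × (Fin n → ℝ), E)) (i : Fin n) :
    ∃ H : 𝓢((Fin n → ℝ) × (Fin n → ℝ), E), ∀ z,
      partialFourier H z = z.1 i • partialFourier G z := by
  have hg : (fun z : (Fin n → ℝ) × (Fin n → ℝ) => z.1 i).HasTemperateGrowth :=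
    ((ContinuousLinearMap.proj i : (Fin n → ℝ) →L[ℝ] ℝ).comp
      (ContinuousLinearMap.fst ℝ (Fin n → ℝ) (Fin n → ℝ))).hasTemperateGrowth
  refine ⟨SchwartzMap.smulLeftCLM E (fun z => z.1 i) G, fun z => ?_⟩
  rw [partialFourier, partialFourier, ← integral_smul]
  refine integral_congr_ae (.of_forall fun y => ?_)
  simp only [SchwartzMap.smulLeftCLM_apply_apply hg]
  exact smul_comm _ _ _

/-- Multiplication by a coordinate of the second variable. -/
theorem exists_partialFourier_eq_snd_smul (G : 𝓢((Fin n → ℝ) × (Fin n → ℝ), E)) (i : Fin n) :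
    ∃ H : 𝓢((Fin n → ℝ) × (Fin n → ℝ), E), ∀ z,
      partialFourier H z = z.2 i • partialFourier G z := by
  set e : Fin n → ℝ := Pi.single i 1
  let D : 𝓢((Fin n → ℝ) × (Fin n → ℝ), E) :=
    SchwartzMap.evalCLM ℝ _ E (0, e) (SchwartzMap.fderivCLM ℝ _ E G)
  refine ⟨(-Complex.I) • D, fun z => ?_⟩
  have hslice (y : Fin n → ℝ) :
      HasFDerivAt (fun y => G (z.1, y)) ((fderiv ℝ G (z.1, y)).comp
        (ContinuousLinearMap.inr ℝ (Fin n → ℝ) (Fin n → ℝ))) y :=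
    (G.differentiable (z.1, y)).hasFDerivAt.comp y (hasFDerivAt_prodMk_right z.1 y)
  have hD (y : Fin n → ℝ) : fderiv ℝ (fun y => G (z.1, y)) y e = D (z.1, y) := by
    rw [(hslice y).fderiv]
    simp [D]
  have hphase (y : Fin n → ℝ) : fderiv ℝ (fun y => phase y z.2) y e =
      z.2 i • (-Complex.I * phase y z.2) := by
    rw [(hasFDerivAt_phase_left y z.2).fderiv]
    simp [dotSnd_apply, dotn, e, Pi.single_apply]
  have key := integral_smul_fderiv_eq_neg_fderiv_smul_of_integrable (μ := volume)
    (f := fun y => phase y z.2) (g := fun y => G (z.1, y)) (v := e)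
    (by
      simp only [hphase, smul_assoc, mul_smul]
      exact ((integrable_phase_smul G z.1 z.2).smul (-Complex.I)).smul (z.2 i))
    (by simpa only [hD] using integrable_phase_smul D z.1 z.2)
    (integrable_phase_smul G z.1 z.2)
    (fun y _ => (hasFDerivAt_phase_left y z.2).differentiableAt)
    (fun y _ => (hslice y).differentiableAt)
  simp only [hD, hphase, smul_assoc, mul_smul, integral_smul] at key
  calc partialFourier ((-Complex.I) • D) z
      = (-Complex.I) • ∫ y, phase y z.2 • D (z.1, y) := by
        rw [partialFourier, ← integral_smul]
        exact integral_congr_ae (.of_forall fun y => smul_comm _ _ _)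
    _ = z.2 i • partialFourier G z := by
        rw [key, partialFourier, smul_neg, smul_comm (-Complex.I) (z.2 i), smul_smul]
        simp

theorem norm_le_sum_coords (z : (Fin n → ℝ) × (Fin n → ℝ)) :
    ‖z‖ ≤ ∑ i, (|z.1 i| + |z.2 i|) := by
  have hs : 0 ≤ ∑ i, (|z.1 i| + |z.2 i|) := Finset.sum_nonneg fun _ _ => by positivity
  have hi (i : Fin n) : |z.1 i| + |z.2 i| ≤ ∑ i, (|z.1 i| + |z.2 i|) :=
    Finset.single_le_sum (f := fun i => |z.1 i| + |z.2 i|) (fun _ _ => by positivity)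
      (Finset.mem_univ i)
  refine max_le ?_ ?_ <;> refine (pi_norm_le_iff_of_nonneg hs).2 fun i => ?_
  · exact (le_add_of_nonneg_right (abs_nonneg _)).trans (hi i)
  · exact (le_add_of_nonneg_left (abs_nonneg _)).trans (hi i)

theorem exists_pow_mul_norm_partialFourier_le (k : ℕ) :
    ∀ G : 𝓢((Fin n → ℝ) × (Fin n → ℝ), E),
      ∃ C : ℝ, ∀ z, ‖z‖ ^ k * ‖partialFourier G z‖ ≤ C := by
  induction k with
  | zero => simpa using exists_norm_partialFourier_le
  | succ k ih =>
    intro G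
    choose H hH using exists_partialFourier_eq_fst_smul G
    choose K hK using exists_partialFourier_eq_snd_smul G
    choose A hA using fun i => ih (H i)
    choose B hB using fun i => ih (K i)
    refine ⟨∑ i, (A i + B i), fun z => ?_⟩
    calc ‖z‖ ^ (k + 1) * ‖partialFourier G z‖
        ≤ (‖z‖ ^ k * ∑ i, (|z.1 i| + |z.2 i|)) * ‖partialFourier G z‖ := by
          rw [pow_succ]
          gcongr
          exact norm_le_sum_coords z
      _ = ∑ i, (‖z‖ ^ k * ‖partialFourier (H i) z‖ + ‖z‖ ^ k * ‖partialFourier (K i) z‖) := by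
          rw [Finset.mul_sum, Finset.sum_mul]
          refine Finset.sum_congr rfl fun i _ => ?_
          rw [hH, hK, norm_smul, norm_smul, Real.norm_eq_abs, Real.norm_eq_abs]
          ring
      _ ≤ _ := Finset.sum_le_sum fun i _ => add_le_add (hA i z) (hB i z)

theorem partialFourier_decay (k m : ℕ) : ∀ {E : Type} [NormedAddCommGroup E] [NormedSpace ℂ E]
    (G : 𝓢((Fin n → ℝ) × (Fin n → ℝ), E)),
      ∃ C : ℝ, ∀ z, ‖z‖ ^ k * ‖iteratedFDeriv ℝ m (partialFourier G) z‖ ≤ C := by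
  induction m with
  | zero =>
    intro E _ _ G
    simpa using exists_pow_mul_norm_partialFourier_le k G
  | succ m ih =>
    intro E _ _ G
    have h : fderiv ℝ (partialFourier G) = partialFourier (derivSymbol G) :=
      funext fun z => (hasFDerivAt_partialFourier G z).fderiv
    simpa only [← h, norm_iteratedFDeriv_fderiv] using ih (derivSymbol G)

/-- The partial Fourier transform of a Schwartz function, as a Schwartz function. -/
def partialFourierSchwartz (G : 𝓢((Fin n → ℝ) × (Fin n → ℝ), E)) :
    𝓢((Fin n → ℝ) × (Fin n → ℝ), E) where
  toFun := partialFourier G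
  smooth' := contDiff_infty.2 fun m => contDiff_partialFourier m G
  decay' k m := partialFourier_decay k m G

end PartialFourier

section Plancherel

variable {n : ℕ}

/-- The slice `y ↦ G (x, y)` of a Schwartz function, on Euclidean space. -/
def euclideanSlice (G : 𝓢((Fin n → ℝ) × (Fin n → ℝ), ℂ)) (x : Fin n → ℝ) :
    𝓢(EuclideanSpace ℝ (Fin n), ℂ) :=
  SchwartzMap.compCLMOfContinuousLinearEquiv ℂ (EuclideanSpace.equiv (Fin n) ℝ)
    (SchwartzMap.compCLM ℂ (g := fun y : Fin n → ℝ => (x, y))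
      (by
        have h := (Function.HasTemperateGrowth.const (E := Fin n → ℝ)
          ((x, 0) : (Fin n → ℝ) × (Fin n → ℝ))).add
          (ContinuousLinearMap.inr ℝ (Fin n → ℝ) (Fin n → ℝ)).hasTemperateGrowth
        convert h using 1
        ext y <;> simp)
      ⟨1, 1, fun y => by
        have h : ‖y‖ ≤ ‖((x, y) : (Fin n → ℝ) × (Fin n → ℝ))‖ := le_max_right _ _
        linarith⟩ G)

theorem euclideanSlice_apply (G : 𝓢((Fin n → ℝ) × (Fin n → ℝ), ℂ)) (x : Fin n → ℝ)
    (y : EuclideanSpace ℝ (Fin n)) : euclideanSlice G x y = G (x, y.ofLp) := rfl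

theorem integral_comp_ofLp {F : Type*} [NormedAddCommGroup F] [NormedSpace ℝ F]
    (f : (Fin n → ℝ) → F) :
    ∫ y : EuclideanSpace ℝ (Fin n), f y.ofLp = ∫ y, f y :=
  (PiLp.volume_preserving_ofLp (Fin n)).integral_comp
    (MeasurableEquiv.toLp 2 (Fin n → ℝ)).symm.measurableEmbedding f

theorem fourier_euclideanSlice (G : 𝓢((Fin n → ℝ) × (Fin n → ℝ), ℂ)) (x : Fin n → ℝ)
    (η : EuclideanSpace ℝ (Fin n)) :
    𝓕 (euclideanSlice G x) η = partialFourier G (x, (2 * Real.pi) • η.ofLp) := by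
  rw [SchwartzMap.fourier_coe, Real.fourier_eq', partialFourier, ← integral_comp_ofLp]
  refine integral_congr_ae (.of_forall fun y => ?_)
  simp only [euclideanSlice_apply, phase]
  congr 2
  simp only [dotn, PiLp.inner_apply, Pi.smul_apply, smul_eq_mul]
  push_cast
  rw [Finset.mul_sum, Finset.mul_sum, Finset.sum_mul]
  refine Finset.sum_congr rfl fun i _ => ?_
  simp
  ring

/-- Plancherel's identity for the partial Fourier transform. -/
theorem integral_norm_sq_partialFourier (G : 𝓢((Fin n → ℝ) × (Fin n → ℝ), ℂ)) (x : Fin n → ℝ) :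
    ∫ ξ, ‖partialFourier G (x, ξ)‖ ^ 2 = (2 * Real.pi) ^ n * ∫ y, ‖G (x, y)‖ ^ 2 := by
  have h := SchwartzMap.integral_norm_sq_fourier (euclideanSlice G x)
  simp only [fourier_euclideanSlice, euclideanSlice_apply] at h
  rw [integral_comp_ofLp fun y => ‖G (x, y)‖ ^ 2,
    integral_comp_ofLp fun η => ‖partialFourier G (x, (2 * Real.pi) • η)‖ ^ 2,
    Measure.integral_comp_smul volume (fun ξ => ‖partialFourier G (x, ξ)‖ ^ 2),
    Module.finrank_fin_fun, abs_of_nonneg (by positivity), smul_eq_mul] at h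
  rw [← h, mul_inv_cancel_left₀ (by positivity)]

instance hasTemperateGrowth_volume_prod :
    (volume : Measure ((Fin n → ℝ) × (Fin n → ℝ))).HasTemperateGrowth :=
  have : (volume : Measure ((Fin n → ℝ) × (Fin n → ℝ))).IsAddHaarMeasure :=
    Measure.prod.instIsAddHaarMeasure volume volume
  inferInstance

theorem integrable_norm_sq {V : Type*} [NormedAddCommGroup V] [NormedSpace ℝ V]
    [MeasureSpace V] [BorelSpace V] [SecondCountableTopology V]
    [(volume : Measure V).HasTemperateGrowth] (f : 𝓢(V, ℂ)) :
    Integrable fun z => ‖f z‖ ^ 2 :=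
  (memLp_two_iff_integrable_sq_norm (f.memLp 2).1).1 (f.memLp 2)

end Plancherel

section Wigner

variable {n : ℕ}

/-- The change of variables `(x, y) ↦ (x + y/2, x - y/2)`. -/
def midpointEquiv (n : ℕ) :
    ((Fin n → ℝ) × (Fin n → ℝ)) ≃L[ℝ] ((Fin n → ℝ) × (Fin n → ℝ)) :=
  let p := ContinuousLinearMap.fst ℝ (Fin n → ℝ) (Fin n → ℝ)
  let q := ContinuousLinearMap.snd ℝ (Fin n → ℝ) (Fin n → ℝ)
  ContinuousLinearEquiv.equivOfInverse
    ((p + (2⁻¹ : ℝ) • q).prod (p - (2⁻¹ : ℝ) • q)) (((2⁻¹ : ℝ) • (p + q)).prod (p - q))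
    (fun z => by ext i <;> simp [p, q] <;> ring)
    (fun z => by ext i <;> simp [p, q] <;> ring)

/-- The function `(x, y) ↦ u (x + y/2) * conj (v (x - y/2))`. -/
def wignerKernel (u v : 𝓢(Fin n → ℝ, ℂ)) : 𝓢((Fin n → ℝ) × (Fin n → ℝ), ℂ) :=
  SchwartzMap.compCLMOfContinuousLinearEquiv ℂ (midpointEquiv n)
    (tensor u (v.postcompCLM (Complex.conjCLE : ℂ →L[ℝ] ℂ)))

theorem wignerKernel_apply (u v : 𝓢(Fin n → ℝ, ℂ)) (x y : Fin n → ℝ) :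
    wignerKernel u v (x, y) =
      u (x + (2⁻¹ : ℝ) • y) * (starRingEnd ℂ) (v (x - (2⁻¹ : ℝ) • y)) := rfl

theorem integral_norm_sq_wignerKernel (u v : 𝓢(Fin n → ℝ, ℂ)) :
    ∫ z, ‖wignerKernel u v z‖ ^ 2 = (∫ x, ‖u x‖ ^ 2) * ∫ x, ‖v x‖ ^ 2 := by
  have hint : Integrable fun z : (Fin n → ℝ) × (Fin n → ℝ) => ‖v z.1‖ ^ 2 * ‖u (z.1 + z.2)‖ ^ 2 :=
    (measurePreserving_prod_add (volume : Measure (Fin n → ℝ))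
      (volume : Measure (Fin n → ℝ))).integrable_comp_of_integrable
      ((integrable_norm_sq v).mul_prod (integrable_norm_sq u))
  calc ∫ z, ‖wignerKernel u v z‖ ^ 2
      = ∫ y, ∫ x, ‖wignerKernel u v (x, y)‖ ^ 2 :=
        integral_prod_symm _ (integrable_norm_sq _)
    _ = ∫ y, ∫ x, ‖v x‖ ^ 2 * ‖u (x + y)‖ ^ 2 := by
        refine integral_congr_ae (.of_forall fun y => ?_)
        refine Eq.trans ?_ (integral_sub_right_eq_self
          (fun x => ‖v x‖ ^ 2 * ‖u (x + y)‖ ^ 2) ((2⁻¹ : ℝ) • y))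
        refine integral_congr_ae (.of_forall fun x => ?_)
        have hx : x - (2⁻¹ : ℝ) • y + y = x + (2⁻¹ : ℝ) • y := by
          ext i
          simp
          ring
        simp only [wignerKernel_apply, norm_mul, RCLike.norm_conj, hx]
        ring
    _ = ∫ x, ∫ y, ‖v x‖ ^ 2 * ‖u (x + y)‖ ^ 2 := (integral_integral_swap hint).symm
    _ = ∫ x, ‖v x‖ ^ 2 * ∫ y, ‖u y‖ ^ 2 := by
        refine integral_congr_ae (.of_forall fun x => ?_)
        simp only [integral_const_mul]
        rw [integral_add_left_eq_self (fun y => ‖u y‖ ^ 2) x]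
    _ = _ := by rw [integral_mul_const, mul_comm]

theorem integral_norm_sq_partialFourierSchwartz (G : 𝓢((Fin n → ℝ) × (Fin n → ℝ), ℂ)) :
    ∫ z, ‖partialFourierSchwartz G z‖ ^ 2 = (2 * Real.pi) ^ n * ∫ z, ‖G z‖ ^ 2 := by
  have hG := integral_prod (μ := volume) (ν := volume) _ (integrable_norm_sq G)
  have hP := integral_prod (μ := volume) (ν := volume) _
    (integrable_norm_sq (partialFourierSchwartz G))
  rw [Measure.volume_eq_prod, hG, hP, ← integral_const_mul]
  exact integral_congr_ae (.of_forall fun x => integral_norm_sq_partialFourier G x)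

end Wigner

end Wigner

/-- For Schwartz functions `u, v` on `ℝⁿ`, the Wigner transform
`W(u,v)(x,ξ) = (2π)^{−n} ∫ u(x+y/2) conj(v(x−y/2)) e^{−i(y|ξ)} dy` is a
well-defined Schwartz function on `ℝ^{2n}`, and it satisfies the Moyal identity
`∫ |W(u,v)|² = (2π)^{−n} ‖u‖²_{L²} ‖v‖²_{L²}`. -/
theorem wigner_schwartz_and_moyal (n : ℕ) (hn : 1 ≤ n)
    (u v : SchwartzMap (Fin n → ℝ) ℂ) :
    ∃ W : SchwartzMap ((Fin n → ℝ) × (Fin n → ℝ)) ℂ,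
      (∀ x ξ : Fin n → ℝ,
        W (x, ξ) = ((((2 * Real.pi) ^ n)⁻¹ : ℝ) : ℂ) *
          ∫ y : Fin n → ℝ,
            u (x + (2⁻¹ : ℝ) • y) * (starRingEnd ℂ) (v (x - (2⁻¹ : ℝ) • y)) *
              Complex.exp (-Complex.I * ((dotn y ξ : ℝ) : ℂ))) ∧
      (∫ z : (Fin n → ℝ) × (Fin n → ℝ), ‖W z‖ ^ 2) =
        ((2 * Real.pi) ^ n)⁻¹ * (∫ x : Fin n → ℝ, ‖u x‖ ^ 2) *
          ∫ x : Fin n → ℝ, ‖v x‖ ^ 2 := by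
  refine ⟨((((2 * Real.pi) ^ n)⁻¹ : ℝ) : ℂ) •
    Wigner.partialFourierSchwartz (Wigner.wignerKernel u v), fun x ξ => ?_, ?_⟩
  · rw [smul_apply, smul_eq_mul]
    congr 1
    refine integral_congr_ae (.of_forall fun y => ?_)
    simp only [Wigner.wignerKernel_apply, Wigner.phase, smul_eq_mul]
    exact mul_comm _ _
  · have hpi : (0 : ℝ) < (2 * Real.pi) ^ n := by positivity
    simp only [smul_apply, norm_smul, mul_pow ‖(_ : ℂ)‖ ‖(_ : ℂ)‖]
    rw [integral_const_mul, Wigner.integral_norm_sq_partialFourierSchwartz,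
      Wigner.integral_norm_sq_wignerKernel, Complex.norm_real, Real.norm_eq_abs, sq_abs]
    generalize (2 * Real.pi) ^ n = p at hpi
    field_simp
end
end

section
/- For every Schwartz function a ∈ S(ℝ^{2n}, ℂ), the Weyl kernel K_a(x, y) := (2π)^{−n} ∫_{ℝⁿ} a((x+y)/2, ξ) e^{i(x−y|ξ)} dξ is a Schwartz function on ℝ^{2n} = ℝⁿ × ℝⁿ, the integral operator (Op(a)u)(x) := ∫_{ℝⁿ} K_a(x, y) u(y) dy is a bounded linear operator on L²(ℝⁿ), and Op(a) is Hilbert–Schmidt with ∫_{ℝ^{2n}} |K_a(x,y)|² dx dy = (2π)^{−n} ∫_{ℝ^{2n}} |a(x,ξ)|² dx dξ. -/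
open MeasureTheory

noncomputable section

section WeylKernel

open scoped SchwartzMap ContDiff

variable {n : ℕ} {X F : Type} [NormedAddCommGroup X] [NormedSpace ℝ X]
  [NormedAddCommGroup F] [NormedSpace ℂ F]

/-- `dotn` as a continuous bilinear form. -/
def dotnCLM (n : ℕ) : (Fin n → ℝ) →L[ℝ] (Fin n → ℝ) →L[ℝ] ℝ :=
  ∑ i, (ContinuousLinearMap.proj (R := ℝ) (φ := fun _ : Fin n => ℝ) i).smulRight
    (ContinuousLinearMap.proj (R := ℝ) (φ := fun _ : Fin n => ℝ) i)

@[simp]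
lemma dotnCLM_apply (p q : Fin n → ℝ) : dotnCLM n p q = dotn p q := by
  simp [dotnCLM, dotn]

/-- The phase `e^{i(η|ξ)}`. -/
def phase (η ξ : Fin n → ℝ) : ℂ := Complex.exp (Complex.I * ((dotn η ξ : ℝ) : ℂ))

@[simp]
lemma norm_phase (η ξ : Fin n → ℝ) : ‖phase η ξ‖ = 1 := by
  rw [phase, mul_comm, Complex.norm_exp_ofReal_mul_I]

lemma phase_eq (η ξ : Fin n → ℝ) :
    phase η ξ = Complex.exp (Complex.I * ((dotnCLM n η ξ : ℝ) : ℂ)) := by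
  simp [phase]

lemma continuous_phase (η : Fin n → ℝ) : Continuous (phase η) := by
  simp only [funext (phase_eq η)]
  fun_prop

/-- The Fourier integral in the second variable, with parameter in the first variable. -/
def partialFourier (f : 𝓢(X × (Fin n → ℝ), F)) (z : X × (Fin n → ℝ)) : F :=
  ∫ ξ : Fin n → ℝ, phase z.2 ξ • f (z.1, ξ)

lemma SchwartzMap.exists_pow_mul_norm_le_snd {Y : Type} [NormedAddCommGroup Y] [NormedSpace ℝ Y]
    (f : 𝓢(X × Y, F)) (k N : ℕ) :
    ∃ C, ∀ x ξ, ‖x‖ ^ k * ‖f (x, ξ)‖ ≤ C * (1 + ‖ξ‖) ^ (-(N : ℝ)) := by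
  refine ⟨2 ^ (k + N) * (Finset.Iic (k + N, 0)).sup
    (fun m => SchwartzMap.seminorm ℝ m.1 m.2) f, fun x ξ => ?_⟩
  have h := SchwartzMap.one_add_le_sup_seminorm_apply (𝕜 := ℝ) (m := (k + N, 0)) le_rfl le_rfl f
    (x, ξ)
  rw [norm_iteratedFDeriv_zero, pow_add] at h
  rw [Real.rpow_neg (by positivity), Real.rpow_natCast, ← div_eq_mul_inv,
    le_div_iff₀ (by positivity)]
  refine le_trans ?_ h
  have h1 : ‖x‖ ≤ 1 + ‖(x, ξ)‖ := (norm_fst_le (x, ξ)).trans (by linarith)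
  have h2 : ‖ξ‖ ≤ ‖(x, ξ)‖ := norm_snd_le (x, ξ)
  calc ‖x‖ ^ k * ‖f (x, ξ)‖ * (1 + ‖ξ‖) ^ N = (‖x‖ ^ k * (1 + ‖ξ‖) ^ N) * ‖f (x, ξ)‖ := by ring
    _ ≤ _ := by gcongr

lemma integrable_one_add_norm_pi (n : ℕ) (C : ℝ) :
    Integrable (fun ξ : Fin n → ℝ => C * (1 + ‖ξ‖) ^ (-((n + 1 : ℕ) : ℝ))) := by
  refine (integrable_one_add_norm ?_).const_mul C
  simp

lemma continuous_phase_smul (f : 𝓢(X × (Fin n → ℝ), F)) (x : X) (η : Fin n → ℝ) :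
    Continuous fun ξ => phase η ξ • f (x, ξ) :=
  (continuous_phase η).smul (f.continuous.comp (by fun_prop))

lemma integrable_slice (f : 𝓢(X × (Fin n → ℝ), F)) (x : X) :
    Integrable fun ξ : Fin n → ℝ => f (x, ξ) := by
  obtain ⟨C, hC⟩ := f.exists_pow_mul_norm_le_snd 0 (n + 1)
  refine (integrable_one_add_norm_pi n C).mono'
    (f.continuous.comp (by fun_prop)).aestronglyMeasurable (.of_forall fun ξ => ?_)
  simpa using hC x ξ

lemma integrable_phase_smul (f : 𝓢(X × (Fin n → ℝ), F)) (x : X) (η : Fin n → ℝ) :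
    Integrable fun ξ => phase η ξ • f (x, ξ) := by
  refine (integrable_slice f x).norm.mono' (continuous_phase_smul f x η).aestronglyMeasurable
    (.of_forall fun ξ => ?_)
  simp [norm_smul]

lemma exists_pow_fst_mul_norm_partialFourier_le (f : 𝓢(X × (Fin n → ℝ), F)) (k : ℕ) :
    ∃ C, ∀ z, ‖z.1‖ ^ k * ‖partialFourier f z‖ ≤ C := by
  obtain ⟨C, hC⟩ := f.exists_pow_mul_norm_le_snd k (n + 1)
  refine ⟨∫ ξ : Fin n → ℝ, C * (1 + ‖ξ‖) ^ (-((n + 1 : ℕ) : ℝ)), fun z => ?_⟩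
  calc ‖z.1‖ ^ k * ‖partialFourier f z‖
      ≤ ‖z.1‖ ^ k * ∫ ξ, ‖f (z.1, ξ)‖ := by
        gcongr
        refine (norm_integral_le_integral_norm _).trans_eq ?_
        simp [norm_smul]
    _ = ∫ ξ, ‖z.1‖ ^ k * ‖f (z.1, ξ)‖ := (integral_const_mul _ _).symm
    _ ≤ _ := integral_mono ((integrable_slice f z.1).norm.const_mul _)
        (integrable_one_add_norm_pi n C) (hC z.1)

lemma hasFDerivAt_phase (η ξ : Fin n → ℝ) :
    HasFDerivAt (phase η)
      ((phase η ξ * Complex.I) • (Complex.ofRealCLM.comp (dotnCLM n η))) ξ := by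
  have h := (((Complex.ofRealCLM.comp (dotnCLM n η)).hasFDerivAt (x := ξ)).const_mul
    Complex.I).cexp
  simp only [funext (phase_eq η), mul_smul]
  exact h

/-- The partial derivative in the `i`-th coordinate of the second variable. -/
def sndDeriv (i : Fin n) (f : 𝓢(X × (Fin n → ℝ), F)) : 𝓢(X × (Fin n → ℝ), F) :=
  LineDeriv.lineDerivOp ((0, Pi.single i (1 : ℝ)) : X × (Fin n → ℝ)) f

/-- Integration by parts: multiplication by `η i` corresponds to a derivative in `ξ i`. -/
lemma smul_partialFourier (f : 𝓢(X × (Fin n → ℝ), F)) (i : Fin n) (z : X × (Fin n → ℝ)) :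
    (z.2 i : ℂ) • partialFourier f z =
      Complex.I • partialFourier (sndDeriv i f) z := by
  obtain ⟨x, η⟩ := z
  have hd (ξ : Fin n → ℝ) : HasFDerivAt (fun ξ => f (x, ξ))
      ((fderiv ℝ f (x, ξ)).comp (ContinuousLinearMap.inr ℝ X (Fin n → ℝ))) ξ :=
    (f.hasFDerivAt (x, ξ)).comp ξ (hasFDerivAt_prodMk_right x ξ)
  have hdot : dotn η (Pi.single i (1 : ℝ)) = η i := by simp [dotn, Pi.single_apply]
  have h1 (ξ : Fin n → ℝ) : fderiv ℝ (phase η) ξ (Pi.single i (1 : ℝ)) =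
      phase η ξ * Complex.I * (η i : ℂ) := by
    rw [(hasFDerivAt_phase η ξ).fderiv]
    simp [hdot]
  have h2 (ξ : Fin n → ℝ) : fderiv ℝ (fun ξ => f (x, ξ)) ξ (Pi.single i (1 : ℝ)) =
      sndDeriv i f (x, ξ) := by
    rw [(hd ξ).fderiv, sndDeriv, SchwartzMap.lineDerivOp_apply_eq_fderiv]
    simp
  have key := integral_smul_fderiv_eq_neg_fderiv_smul_of_integrable (𝕜 := ℂ) (μ := volume)
    (f := phase η) (g := fun ξ => f (x, ξ)) (v := Pi.single i (1 : ℝ)) ?_ ?_ ?_ ?_ ?_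
  · simp only [h1, h2] at key
    have h3 : ∀ ξ, (phase η ξ * Complex.I * (η i : ℂ)) • f (x, ξ) =
        (Complex.I * (η i : ℂ)) • phase η ξ • f (x, ξ) := fun ξ => by
      rw [smul_smul]; congr 1; ring
    simp only [h3, integral_smul] at key
    simp only [partialFourier]
    rw [key, smul_neg, smul_smul, ← mul_assoc, Complex.I_mul_I]
    simp
  · have h3 : ∀ ξ, (phase η ξ * Complex.I * (η i : ℂ)) • f (x, ξ) =
        (Complex.I * (η i : ℂ)) • phase η ξ • f (x, ξ) := fun ξ => by
      rw [smul_smul]; congr 1; ring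
    simp only [h1, h3]
    exact (integrable_phase_smul f x η).smul _
  · simp only [h2]
    exact integrable_phase_smul _ x η
  · exact integrable_phase_smul f x η
  · exact fun ξ _ => (hasFDerivAt_phase η ξ).differentiableAt
  · exact fun ξ _ => (hd ξ).differentiableAt

lemma exists_pow_snd_mul_norm_partialFourier_le (i : Fin n) (k : ℕ)
    (f : 𝓢(X × (Fin n → ℝ), F)) :
    ∃ C, ∀ z, |z.2 i| ^ k * ‖partialFourier f z‖ ≤ C := by
  induction k generalizing f with
  | zero => simpa using exists_pow_fst_mul_norm_partialFourier_le f 0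
  | succ k ih =>
    obtain ⟨C, hC⟩ := ih (sndDeriv i f)
    refine ⟨C, fun z => ?_⟩
    have h := congrArg norm (smul_partialFourier f i z)
    simp only [norm_smul, Complex.norm_real, Complex.norm_I, one_mul, Real.norm_eq_abs] at h
    rw [pow_succ, mul_assoc, h]
    exact hC z

lemma pi_norm_pow_le_sum (η : Fin n → ℝ) {k : ℕ} (hk : k ≠ 0) : ‖η‖ ^ k ≤ ∑ i, |η i| ^ k := by
  rcases isEmpty_or_nonempty (Fin n) with h | h
  · simp [Subsingleton.elim η 0, hk]
  · obtain ⟨i, hi⟩ := (Finite.exists_max fun i => ‖η i‖)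
    have : ‖η‖ ≤ |η i| := (pi_norm_le_iff_of_nonneg (abs_nonneg _)).2 hi
    exact (pow_le_pow_left₀ (norm_nonneg _) this k).trans
      (Finset.single_le_sum (f := fun i => |η i| ^ k) (fun _ _ => by positivity) (Finset.mem_univ i))

lemma exists_pow_mul_norm_partialFourier_le (f : 𝓢(X × (Fin n → ℝ), F)) (k : ℕ) :
    ∃ C, ∀ z, ‖z‖ ^ k * ‖partialFourier f z‖ ≤ C := by
  rcases eq_or_ne k 0 with rfl | hk
  · simpa using exists_pow_fst_mul_norm_partialFourier_le f 0
  obtain ⟨C, hC⟩ := exists_pow_fst_mul_norm_partialFourier_le f k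
  choose D hD using fun i => exists_pow_snd_mul_norm_partialFourier_le i k f
  refine ⟨C + ∑ i, D i, fun z => ?_⟩
  have hz : ‖z‖ ^ k ≤ ‖z.1‖ ^ k + ∑ i, |z.2 i| ^ k := by
    rcases max_choice ‖z.1‖ ‖z.2‖ with h | h
    · rw [Prod.norm_def, h]
      exact le_add_of_nonneg_right (Finset.sum_nonneg fun _ _ => by positivity)
    · rw [Prod.norm_def, h]
      exact (pi_norm_pow_le_sum z.2 hk).trans (le_add_of_nonneg_left (by positivity))
  calc ‖z‖ ^ k * ‖partialFourier f z‖
      ≤ (‖z.1‖ ^ k + ∑ i, |z.2 i| ^ k) * ‖partialFourier f z‖ := by gcongr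
    _ = ‖z.1‖ ^ k * ‖partialFourier f z‖ + ∑ i, |z.2 i| ^ k * ‖partialFourier f z‖ := by
        rw [add_mul, Finset.sum_mul]
    _ ≤ _ := add_le_add (hC z) (Finset.sum_le_sum fun i _ => hD i z)

/-- The symbol whose partial Fourier integral is the derivative of that of `f`. -/
def partialFourierDeriv (f : 𝓢(X × (Fin n → ℝ), F)) :
    𝓢(X × (Fin n → ℝ), X × (Fin n → ℝ) →L[ℝ] F) :=
  SchwartzMap.postcompCLM ((ContinuousLinearMap.compL ℝ (X × (Fin n → ℝ)) (X × (Fin n → ℝ)) F).flip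
      ((ContinuousLinearMap.inl ℝ X (Fin n → ℝ)).comp (ContinuousLinearMap.fst ℝ X (Fin n → ℝ))))
      (SchwartzMap.fderivCLM ℝ _ F f) +
    Complex.I • SchwartzMap.smulRightCLM ℂ F
      ((((ContinuousLinearMap.compL ℝ (X × (Fin n → ℝ)) (Fin n → ℝ) ℝ).flip
        (ContinuousLinearMap.snd ℝ X (Fin n → ℝ))).comp (dotnCLM n).flip).comp
          (ContinuousLinearMap.snd ℝ X (Fin n → ℝ))) f

lemma partialFourierDeriv_apply_apply (f : 𝓢(X × (Fin n → ℝ), F)) (z v : X × (Fin n → ℝ)) :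
    partialFourierDeriv f z v = fderiv ℝ f z (v.1, 0) + Complex.I • dotn v.2 z.2 • f z := by
  rw [← dotnCLM_apply]
  rfl

lemma hasFDerivAt_phase_smul (f : 𝓢(X × (Fin n → ℝ), F)) (z : X × (Fin n → ℝ)) (ξ : Fin n → ℝ) :
    HasFDerivAt (fun z : X × (Fin n → ℝ) => phase z.2 ξ • f (z.1, ξ))
      (phase z.2 ξ • partialFourierDeriv f (z.1, ξ)) z := by
  have hcomm : (fun η => phase η ξ) = phase ξ := by
    funext η; simp only [phase, dotn, mul_comm]
  have h1 : HasFDerivAt (fun z : X × (Fin n → ℝ) => phase z.2 ξ) _ z :=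
    HasFDerivAt.comp z (g := fun η => phase η ξ) (by rw [hcomm]; exact hasFDerivAt_phase ξ z.2)
      hasFDerivAt_snd
  have h2 : HasFDerivAt (fun z : X × (Fin n → ℝ) => f (z.1, ξ)) _ z :=
    (f.hasFDerivAt (z.1, ξ)).comp z
      ((hasFDerivAt_fst (𝕜 := ℝ) (p := z)).prodMk (hasFDerivAt_const ξ z))
  have hc2 : phase ξ z.2 = phase z.2 ξ := by rw [← hcomm]
  have hc3 : ∀ v : Fin n → ℝ, dotn ξ v = dotn v ξ := fun v => by simp only [dotn, mul_comm]
  refine (h1.fun_smul h2).congr_fderiv (ContinuousLinearMap.ext fun v => ?_)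
  have e1 : (phase z.2 ξ • partialFourierDeriv f (z.1, ξ)) v =
      phase z.2 ξ • partialFourierDeriv f (z.1, ξ) v := rfl
  rw [e1, partialFourierDeriv_apply_apply]
  simp only [_root_.add_apply, _root_.smul_apply,
    ContinuousLinearMap.smulRight_apply, ContinuousLinearMap.comp_apply,
    ContinuousLinearMap.prod_apply, _root_.zero_apply, ContinuousLinearMap.coe_fst',
    ContinuousLinearMap.coe_snd', Complex.ofRealCLM_apply, dotnCLM_apply, hc2, hc3, smul_add,
    smul_eq_mul, mul_smul, Complex.coe_smul]

lemma hasFDerivAt_partialFourier_of_symbol {f : 𝓢(X × (Fin n → ℝ), F)}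
    {g : 𝓢(X × (Fin n → ℝ), X × (Fin n → ℝ) →L[ℝ] F)}
    (hfg : ∀ z ξ, HasFDerivAt (fun z : X × (Fin n → ℝ) => phase z.2 ξ • f (z.1, ξ))
      (phase z.2 ξ • g (z.1, ξ)) z) (z : X × (Fin n → ℝ)) :
    HasFDerivAt (partialFourier f) (partialFourier g z) z := by
  obtain ⟨C, hC⟩ := g.exists_pow_mul_norm_le_snd 0 (n + 1)
  have hb : ∀ (ξ : Fin n → ℝ) (z : X × (Fin n → ℝ)),
      ‖phase z.2 ξ • g (z.1, ξ)‖ ≤ C * (1 + ‖ξ‖) ^ (-((n + 1 : ℕ) : ℝ)) := fun ξ z => by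
    rw [norm_smul, norm_phase]
    simpa using hC z.1 ξ
  have key := hasFDerivAt_integral_of_dominated_of_fderiv_le (𝕜 := ℝ)
    (μ := (volume : Measure (Fin n → ℝ))) (x₀ := z)
    (F := fun z ξ => phase z.2 ξ • f (z.1, ξ))
    (F' := fun z ξ => phase z.2 ξ • g (z.1, ξ))
    (bound := fun ξ => C * (1 + ‖ξ‖) ^ (-((n + 1 : ℕ) : ℝ))) Filter.univ_mem
    (.of_forall fun z => (continuous_phase_smul f z.1 z.2).aestronglyMeasurable)
    (integrable_phase_smul f z.1 z.2)
    (continuous_phase_smul g z.1 z.2).aestronglyMeasurable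
    (.of_forall fun ξ z _ => hb ξ z) (integrable_one_add_norm_pi n C)
    (.of_forall fun ξ z _ => hfg z ξ)
  exact key

lemma hasFDerivAt_partialFourier (f : 𝓢(X × (Fin n → ℝ), F)) (z : X × (Fin n → ℝ)) :
    HasFDerivAt (partialFourier f) (partialFourier (partialFourierDeriv f) z) z :=
  hasFDerivAt_partialFourier_of_symbol (hasFDerivAt_phase_smul f) z

lemma fderiv_partialFourier (f : 𝓢(X × (Fin n → ℝ), F)) :
    fderiv ℝ (partialFourier f) = partialFourier (partialFourierDeriv f) :=
  funext fun z => (hasFDerivAt_partialFourier f z).fderiv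

lemma contDiff_partialFourier_nat (m : ℕ) :
    ∀ {F : Type} [NormedAddCommGroup F] [NormedSpace ℂ F] (f : 𝓢(X × (Fin n → ℝ), F)),
      ContDiff ℝ m (partialFourier f) := by
  induction m with
  | zero =>
    intro F _ _ f
    exact contDiff_zero.2 (continuous_iff_continuousAt.2 fun z =>
      (hasFDerivAt_partialFourier f z).continuousAt)
  | succ m ih =>
    intro F _ _ f
    push_cast
    refine contDiff_succ_iff_fderiv.2
      ⟨fun z => (hasFDerivAt_partialFourier f z).differentiableAt, by simp, ?_⟩
    rw [fderiv_partialFourier]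
    exact ih _

lemma exists_pow_mul_norm_iteratedFDeriv_partialFourier_le (k m : ℕ) :
    ∀ {F : Type} [NormedAddCommGroup F] [NormedSpace ℂ F] (f : 𝓢(X × (Fin n → ℝ), F)),
      ∃ C, ∀ z, ‖z‖ ^ k * ‖iteratedFDeriv ℝ m (partialFourier f) z‖ ≤ C := by
  induction m with
  | zero =>
    intro F _ _ f
    simpa using exists_pow_mul_norm_partialFourier_le f k
  | succ m ih =>
    intro F _ _ f
    simp only [← norm_iteratedFDeriv_fderiv, fderiv_partialFourier]
    exact ih _

/-- The partial Fourier integral of a Schwartz function, as a Schwartz function. -/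
def partialFourierSchwartz (f : 𝓢(X × (Fin n → ℝ), F)) : 𝓢(X × (Fin n → ℝ), F) where
  toFun := partialFourier f
  smooth' := contDiff_infty.2 fun m => contDiff_partialFourier_nat m f
  decay' k m := exists_pow_mul_norm_iteratedFDeriv_partialFourier_le k m f

/-- The restriction of a Schwartz function to the slice `{x} × ℝⁿ`, with `ℝⁿ` carrying the
Euclidean norm. -/
def sliceSchwartz (f : 𝓢(X × (Fin n → ℝ), F)) (x : X) : 𝓢(EuclideanSpace ℝ (Fin n), F) :=
  SchwartzMap.compCLMOfContinuousLinearEquiv ℝ (EuclideanSpace.equiv (Fin n) ℝ)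
    (SchwartzMap.compCLM ℝ (g := fun ξ : Fin n → ℝ => (x, ξ))
      (by
        have : (fun ξ : Fin n → ℝ => (x, ξ)) =
            (fun _ => (x, 0)) + ⇑(ContinuousLinearMap.inr ℝ X (Fin n → ℝ)) := by
          ext ξ <;> simp
        rw [this]
        exact (Function.HasTemperateGrowth.const _).add
          (ContinuousLinearMap.inr ℝ X (Fin n → ℝ)).hasTemperateGrowth)
      ⟨1, 1, fun ξ => by
        have := norm_snd_le (x, ξ)
        simp only [pow_one, one_mul]
        linarith⟩ f)

lemma sliceSchwartz_apply (f : 𝓢(X × (Fin n → ℝ), F)) (x : X) (ξ : EuclideanSpace ℝ (Fin n)) :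
    sliceSchwartz f x ξ = f (x, WithLp.ofLp ξ) := rfl

lemma integral_euclideanSpace_ofLp {E : Type*} [NormedAddCommGroup E] [NormedSpace ℝ E]
    (g : (Fin n → ℝ) → E) :
    ∫ v : EuclideanSpace ℝ (Fin n), g (WithLp.ofLp v) = ∫ v, g v :=
  (EuclideanSpace.volume_preserving_symm_measurableEquiv_toLp (Fin n)).integral_comp' g

lemma partialFourier_eq_fourier (f : 𝓢(X × (Fin n → ℝ), F)) (x : X)
    (η : EuclideanSpace ℝ (Fin n)) :
    partialFourier f (x, (-(2 * Real.pi)) • WithLp.ofLp η) =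
      FourierTransform.fourier (sliceSchwartz f x) η := by
  rw [SchwartzMap.fourier_coe, Real.fourier_eq', partialFourier, ← integral_euclideanSpace_ofLp]
  congr 1
  funext v
  rw [sliceSchwartz_apply, phase]
  congr 2
  simp only [dotn, PiLp.inner_apply, Pi.smul_apply, smul_eq_mul, RCLike.inner_apply, conj_trivial]
  rw [mul_comm, Finset.mul_sum]
  congr 2
  exact Finset.sum_congr rfl fun i _ => by ring

/-- Plancherel's theorem on a slice. -/
lemma integral_norm_sq_partialFourier_slice (f : 𝓢(X × (Fin n → ℝ), ℂ)) (x : X) :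
    ∫ η, ‖partialFourier f (x, η)‖ ^ 2 = (2 * Real.pi) ^ n * ∫ ξ, ‖f (x, ξ)‖ ^ 2 := by
  have h1 : ∫ η : Fin n → ℝ, ‖partialFourier f (x, (-(2 * Real.pi)) • η)‖ ^ 2 =
      ∫ ξ, ‖f (x, ξ)‖ ^ 2 := by
    rw [← integral_euclideanSpace_ofLp, ← integral_euclideanSpace_ofLp]
    simp only [partialFourier_eq_fourier]
    exact SchwartzMap.integral_norm_sq_fourier _
  rw [Measure.integral_comp_smul volume (fun η => ‖partialFourier f (x, η)‖ ^ 2)] at h1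
  rw [← h1, smul_eq_mul, ← mul_assoc]
  simp only [Module.finrank_fintype_fun_eq_card, Fintype.card_fin, abs_inv, abs_pow, abs_neg]
  rw [abs_of_pos Real.two_pi_pos, mul_inv_cancel₀ (by positivity), one_mul]

lemma SchwartzMap.integrable_norm_sq {E : Type*} [NormedAddCommGroup E] [NormedSpace ℝ E]
    [MeasurableSpace E] [BorelSpace E] [SecondCountableTopology E] (μ : Measure E)
    [μ.HasTemperateGrowth] (f : 𝓢(E, ℂ)) : Integrable (fun z => ‖f z‖ ^ 2) μ :=
  (f.memLp 2 μ).norm.integrable_sq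

lemma integral_norm_sq_partialFourier (f : 𝓢((Fin n → ℝ) × (Fin n → ℝ), ℂ)) :
    ∫ z, ‖partialFourier f z‖ ^ 2 = (2 * Real.pi) ^ n * ∫ z, ‖f z‖ ^ 2 := by
  have : (volume : Measure ((Fin n → ℝ) × (Fin n → ℝ))).IsAddHaarMeasure :=
    Measure.prod.instIsAddHaarMeasure volume volume
  have hf := f.integrable_norm_sq volume
  have hg := (partialFourierSchwartz f).integrable_norm_sq volume
  rw [Measure.volume_eq_prod] at hf hg ⊢
  refine (integral_prod _ hg).trans ?_
  rw [integral_prod _ hf, ← integral_const_mul]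
  congr 1
  funext x
  exact integral_norm_sq_partialFourier_slice f x

/-- The linear change of variables `(x, y) ↦ ((x + y) / 2, x - y)`. -/
def midpointDiff (V : Type*) [NormedAddCommGroup V] [NormedSpace ℝ V] : (V × V) ≃L[ℝ] (V × V) :=
  ContinuousLinearEquiv.equivOfInverse
    (((2⁻¹ : ℝ) • (ContinuousLinearMap.fst ℝ V V + ContinuousLinearMap.snd ℝ V V)).prod
      (ContinuousLinearMap.fst ℝ V V - ContinuousLinearMap.snd ℝ V V))
    ((ContinuousLinearMap.fst ℝ V V + (2⁻¹ : ℝ) • ContinuousLinearMap.snd ℝ V V).prod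
      (ContinuousLinearMap.fst ℝ V V - (2⁻¹ : ℝ) • ContinuousLinearMap.snd ℝ V V))
    (fun z => by ext1 <;> simp <;> module) (fun z => by ext1 <;> simp <;> module)

lemma midpointDiff_apply {V : Type*} [NormedAddCommGroup V] [NormedSpace ℝ V] (x y : V) :
    midpointDiff V (x, y) = ((2⁻¹ : ℝ) • (x + y), x - y) := rfl

lemma measurePreserving_midpointDiff (n : ℕ) :
    MeasurePreserving (midpointDiff (Fin n → ℝ)) (volume.prod volume) (volume.prod volume) := by
  have h1 := measurePreserving_sub_prod (volume : Measure (Fin n → ℝ)) volume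
  have h2 : MeasurePreserving (fun z : (Fin n → ℝ) × (Fin n → ℝ) => (z.1, (2⁻¹ : ℝ) • z.1 + z.2))
      (volume.prod volume) (volume.prod volume) :=
    (MeasurePreserving.id volume).skew_product (g := fun a b => (2⁻¹ : ℝ) • a + b) (by fun_prop)
      (.of_forall fun a => map_add_left_eq_self _ _)
  have h3 : ⇑(midpointDiff (Fin n → ℝ)) = (Prod.swap ∘
      fun z : (Fin n → ℝ) × (Fin n → ℝ) => (z.1, (2⁻¹ : ℝ) • z.1 + z.2)) ∘
      fun z : (Fin n → ℝ) × (Fin n → ℝ) => (z.1 - z.2, z.2) := by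
    funext ⟨x, y⟩
    refine Prod.ext ?_ rfl
    simp only [midpointDiff_apply, Function.comp_apply, Prod.swap_prod_mk]
    module
  rw [h3]
  exact (Measure.measurePreserving_swap.comp h2).comp h1

/-- The Weyl kernel of a Schwartz symbol, as a Schwartz function. -/
def weylKernel (a : 𝓢((Fin n → ℝ) × (Fin n → ℝ), ℂ)) : 𝓢((Fin n → ℝ) × (Fin n → ℝ), ℂ) :=
  ((((2 * Real.pi) ^ n)⁻¹ : ℝ) : ℂ) •
    SchwartzMap.compCLMOfContinuousLinearEquiv ℂ (midpointDiff (Fin n → ℝ))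
      (partialFourierSchwartz a)

lemma weylKernel_apply (a : 𝓢((Fin n → ℝ) × (Fin n → ℝ), ℂ)) (z : (Fin n → ℝ) × (Fin n → ℝ)) :
    weylKernel a z = ((((2 * Real.pi) ^ n)⁻¹ : ℝ) : ℂ) *
      partialFourier a (midpointDiff (Fin n → ℝ) z) := rfl

lemma integral_norm_sq_weylKernel (a : 𝓢((Fin n → ℝ) × (Fin n → ℝ), ℂ)) :
    ∫ z, ‖weylKernel a z‖ ^ 2 = ((2 * Real.pi) ^ n)⁻¹ * ∫ z, ‖a z‖ ^ 2 := by
  have h := (measurePreserving_midpointDiff n).integral_comp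
    (midpointDiff (Fin n → ℝ)).toHomeomorph.measurableEmbedding
    (fun z => ‖partialFourier a z‖ ^ 2)
  rw [← Measure.volume_eq_prod] at h
  simp only [weylKernel_apply, norm_mul, mul_pow, integral_const_mul, Complex.norm_real]
  rw [h, integral_norm_sq_partialFourier, Real.norm_of_nonneg (by positivity)]
  field_simp
  ring

lemma SchwartzMap.exists_norm_le_mul_memLp_two (K : 𝓢((Fin n → ℝ) × (Fin n → ℝ), ℂ)) :
    ∃ w₁ w₂ : (Fin n → ℝ) → ℝ, MemLp w₁ 2 ∧ MemLp w₂ 2 ∧ (∀ x, 0 ≤ w₂ x) ∧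
      ∀ x y, ‖K (x, y)‖ ≤ w₁ x * w₂ y := by
  set w : ℝ → (Fin n → ℝ) → ℝ := fun C x => C * ((1 + ‖x‖) ^ (n + 1))⁻¹ with hw
  have hmem (C : ℝ) : MemLp (w C) 2 := by
    refine (memLp_two_iff_integrable_sq ?_).2 ?_
    · refine Continuous.aestronglyMeasurable ?_
      refine continuous_const.mul (Continuous.inv₀ (by fun_prop) fun x => by positivity)
    · refine (integrable_one_add_norm_pi n (C ^ 2)).mono' ?_ (.of_forall fun x => ?_)
      · refine Continuous.aestronglyMeasurable ?_
        refine (continuous_const.mul (Continuous.inv₀ (by fun_prop) fun x => by positivity)).pow 2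
      · rw [Real.norm_of_nonneg (by positivity), Real.rpow_neg (by positivity),
          Real.rpow_natCast, hw, mul_pow, inv_pow]
        gcongr
        exact le_self_pow₀ (one_le_pow₀ (by simp)) two_ne_zero
  refine ⟨w _, w 1, hmem (2 ^ (2 * (n + 1)) * (Finset.Iic (2 * (n + 1), 0)).sup
    (fun m => SchwartzMap.seminorm ℝ m.1 m.2) K), hmem 1, fun x => by positivity, fun x y => ?_⟩
  have h := SchwartzMap.one_add_le_sup_seminorm_apply (𝕜 := ℝ) (m := (2 * (n + 1), 0)) le_rfl
    le_rfl K (x, y)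
  rw [norm_iteratedFDeriv_zero] at h
  simp only [hw]
  rw [one_mul, ← div_eq_mul_inv, ← div_eq_mul_inv, div_div, le_div_iff₀ (by positivity)]
  refine le_trans ?_ h
  rw [mul_comm]
  simp only [two_mul, pow_add _ (n + 1) (n + 1)]
  have h1 := norm_fst_le (x, y)
  have h2 := norm_snd_le (x, y)
  gcongr

/-- A kernel dominated by a product of square-integrable functions defines a bounded operator
on `L²`. -/
lemma exists_integralOperator {α : Type*} [MeasurableSpace α] {μ : Measure α} [SFinite μ]
    {K : α × α → ℂ} (hK : AEStronglyMeasurable K (μ.prod μ)) {w₁ w₂ : α → ℝ} (h₁ : MemLp w₁ 2 μ)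
    (h₂ : MemLp w₂ 2 μ) (h₂0 : ∀ y, 0 ≤ w₂ y) (hb : ∀ x y, ‖K (x, y)‖ ≤ w₁ x * w₂ y)
    (hKx : ∀ x, AEStronglyMeasurable (fun y => K (x, y)) μ) :
    ∃ T : Lp ℂ 2 μ →L[ℂ] Lp ℂ 2 μ, ∀ u : Lp ℂ 2 μ, T u =ᵐ[μ] fun x => ∫ y, K (x, y) * u y ∂μ := by
  have hw (u : Lp ℂ 2 μ) : Integrable (fun y => w₂ y * ‖u y‖) μ :=
    h₂.integrable_mul (Lp.memLp u).norm
  have hbd (u : Lp ℂ 2 μ) (x y : α) : ‖K (x, y) * u y‖ ≤ w₁ x * (w₂ y * ‖u y‖) := by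
    rw [norm_mul, ← mul_assoc]
    exact mul_le_mul_of_nonneg_right (hb x y) (norm_nonneg _)
  have hint (u : Lp ℂ 2 μ) (x : α) : Integrable (fun y => K (x, y) * u y) μ :=
    ((hw u).const_mul (w₁ x)).mono' ((hKx x).mul (Lp.aestronglyMeasurable u))
      (.of_forall (hbd u x))
  have hnorm (u : Lp ℂ 2 μ) (x : α) :
      ‖∫ y, K (x, y) * u y ∂μ‖ ≤ (∫ y, w₂ y * ‖u y‖ ∂μ) * w₁ x := by
    rw [mul_comm, ← integral_const_mul]
    exact norm_integral_le_of_norm_le ((hw u).const_mul _) (.of_forall (hbd u x))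
  have hL2 (u : Lp ℂ 2 μ) : ∫ y, w₂ y * ‖u y‖ ∂μ ≤ ‖h₂.toLp w₂‖ * ‖u‖ := by
    have h := real_inner_le_norm (h₂.toLp w₂) ((Lp.memLp u).norm.toLp _)
    rw [L2.inner_def, Lp.norm_toLp (fun x => ‖u x‖), eLpNorm_norm, ← Lp.norm_def] at h
    refine le_trans (le_of_eq (integral_congr_ae ?_)) h
    filter_upwards [h₂.coeFn_toLp, (Lp.memLp u).norm.coeFn_toLp] with y hy1 hy2
    rw [hy1, hy2]
    simp [mul_comm]
  have hmeas (u : Lp ℂ 2 μ) : AEStronglyMeasurable (fun x => ∫ y, K (x, y) * u y ∂μ) μ :=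
    (hK.mul (Lp.aestronglyMeasurable u).comp_snd).integral_prod_right'
  have hmem (u : Lp ℂ 2 μ) : MemLp (fun x => ∫ y, K (x, y) * u y ∂μ) 2 μ :=
    h₁.of_le_mul (c := ∫ y, w₂ y * ‖u y‖ ∂μ) (hmeas u) (.of_forall fun x => (hnorm u x).trans <|
      mul_le_mul_of_nonneg_left (le_abs_self _)
        (integral_nonneg fun y => mul_nonneg (h₂0 y) (norm_nonneg _)))
  let T : Lp ℂ 2 μ →ₗ[ℂ] Lp ℂ 2 μ :=
    { toFun := fun u => (hmem u).toLp _
      map_add' := fun u v => by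
        rw [← MemLp.toLp_add]
        refine MemLp.toLp_congr _ _ (.of_forall fun x => ?_)
        rw [Pi.add_apply, ← integral_add (hint u x) (hint v x)]
        refine integral_congr_ae ?_
        filter_upwards [Lp.coeFn_add u v] with y hy
        rw [hy, Pi.add_apply, mul_add]
      map_smul' := fun c u => by
        rw [RingHom.id_apply, ← MemLp.toLp_const_smul]
        refine MemLp.toLp_congr _ _ (.of_forall fun x => ?_)
        rw [Pi.smul_apply, ← integral_smul]
        refine integral_congr_ae ?_
        filter_upwards [Lp.coeFn_smul c u] with y hy
        rw [hy, Pi.smul_apply, smul_eq_mul, smul_eq_mul, mul_left_comm] }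
  refine ⟨T.mkContinuous (‖h₂.toLp w₂‖ * ‖h₁.toLp w₁‖) fun u => ?_, fun u => (hmem u).coeFn_toLp⟩
  rw [mul_right_comm]
  refine Lp.norm_le_mul_norm_of_ae_le_mul ?_
  filter_upwards [(hmem u).coeFn_toLp, h₁.coeFn_toLp] with x hx1 hx2
  have : T u x = ∫ y, K (x, y) * u y ∂μ := hx1
  rw [this, hx2]
  refine (hnorm u x).trans ((mul_le_mul_of_nonneg_left (le_abs_self _)
    (integral_nonneg fun y => mul_nonneg (h₂0 y) (norm_nonneg _))).trans ?_)
  exact mul_le_mul_of_nonneg_right (hL2 u) (abs_nonneg _)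

end WeylKernel

/-- For a Schwartz symbol `a` on `ℝ^{2n}`, the Weyl kernel
`K_a(x,y) = (2π)^{−n} ∫ a((x+y)/2, ξ) e^{i(x−y|ξ)} dξ` is a Schwartz function on
`ℝ^{2n}`, the integral operator with kernel `K_a` is a bounded linear operator
on `L²(ℝⁿ)`, and it is Hilbert–Schmidt with
`∫ |K_a|² = (2π)^{−n} ∫ |a|²`. -/
theorem weyl_kernel_bounded_hilbertSchmidt (n : ℕ) (hn : 1 ≤ n)
    (a : SchwartzMap ((Fin n → ℝ) × (Fin n → ℝ)) ℂ) :
    ∃ K : SchwartzMap ((Fin n → ℝ) × (Fin n → ℝ)) ℂ,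
      (∀ x y : Fin n → ℝ,
        K (x, y) = ((((2 * Real.pi) ^ n)⁻¹ : ℝ) : ℂ) *
          ∫ ξ : Fin n → ℝ,
            a ((2⁻¹ : ℝ) • (x + y), ξ) *
              Complex.exp (Complex.I * ((dotn (x - y) ξ : ℝ) : ℂ))) ∧
      (∃ T : Lp ℂ 2 (volume : Measure (Fin n → ℝ)) →L[ℂ]
              Lp ℂ 2 (volume : Measure (Fin n → ℝ)),
        ∀ u : Lp ℂ 2 (volume : Measure (Fin n → ℝ)),
          (T u : (Fin n → ℝ) → ℂ) =ᵐ[volume]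
            fun x => ∫ y : Fin n → ℝ, K (x, y) * u y) ∧
      (∫ z : (Fin n → ℝ) × (Fin n → ℝ), ‖K z‖ ^ 2) =
        ((2 * Real.pi) ^ n)⁻¹ *
          ∫ z : (Fin n → ℝ) × (Fin n → ℝ), ‖a z‖ ^ 2 := by
  refine ⟨weylKernel a, fun x y => ?_, ?_, integral_norm_sq_weylKernel a⟩
  · simp only [weylKernel_apply, midpointDiff_apply, partialFourier, phase, smul_eq_mul, mul_comm]
  · obtain ⟨w₁, w₂, h₁, h₂, h₂0, hb⟩ := (weylKernel a).exists_norm_le_mul_memLp_two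
    exact exists_integralOperator (weylKernel a).continuous.aestronglyMeasurable h₁ h₂ h₂0 hb
      fun x => ((weylKernel a).continuous.comp (by fun_prop)).aestronglyMeasurable
end
end
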